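/- The set {(β,α) ∈ Δ : T_{β,α} has matching} is dense in Δ, i.e. its closure in ℝ² equals the closure of Δ. -/

import Mathlib

noncomputable section

/-- The upper intermediate β-transformation `T⁺_{β,α}` on `[0,1]`. -/
def Tpos (β α : ℝ) (x : ℝ) : ℝ :=
  if x = (1 - α) / β then 0 else Int.fract (β * x + α)

/-- The lower intermediate β-transformation `T⁻_{β,α}` on `[0,1]`. -/
def Tneg (β α : ℝ) (x : ℝ) : ℝ :=
  if x = (1 - α) / β then 1 else Int.fract (β * x + α)

/-- The itinerary `τ⁺_{β,α}(x)`: index `n` (from 0) is the `(n+1)`-st entry;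
entry is `false` (i.e. 0) iff the `n`-th iterate is `< c`. -/
def tauPos (β α x : ℝ) : ℕ → Bool :=
  fun n => if (Tpos β α)^[n] x < (1 - α) / β then false else true

/-- The itinerary `τ⁻_{β,α}(x)`: entry is `false` (i.e. 0) iff the iterate is `≤ c`. -/
def tauNeg (β α x : ℝ) : ℕ → Bool :=
  fun n => if (Tneg β α)^[n] x ≤ (1 - α) / β then false else true

/-- The kneading invariant `k₊` of `(β,α)`. -/
def kPlus (β α : ℝ) : ℕ → Bool := tauPos β α ((1 - α) / β)

/-- The kneading invariant `k₋` of `(β,α)`. -/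
def kMinus (β α : ℝ) : ℕ → Bool := tauNeg β α ((1 - α) / β)

/-- The kneading space `Ω_{β,α}`. -/
def OmegaSet (β α : ℝ) : Set (ℕ → Bool) :=
  (tauPos β α '' Set.Icc 0 1) ∪ (tauNeg β α '' Set.Icc 0 1)

/-- `Ω` is a subshift of finite type: there is a finite set of finite forbidden words
such that `Ω` is exactly the set of sequences avoiding them. -/
def IsSFT (Ω : Set (ℕ → Bool)) : Prop :=
  ∃ F : Finset (List Bool),
    Ω = {ω | ∀ m n : ℕ, List.ofFn (fun i : Fin n => ω (m + i)) ∉ F}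

/-- `T_{β,α}` has matching. -/
def HasMatching (β α : ℝ) : Prop :=
  ∃ n : ℕ, (Tpos β α)^[n] 0 = (Tneg β α)^[n] 1

/-- The matching time: the smallest `n` with `(T⁺)ⁿ(0) = (T⁻)ⁿ(1)`. -/
def matchingTime (β α : ℝ) : ℕ :=
  sInf {n : ℕ | (Tpos β α)^[n] 0 = (Tneg β α)^[n] 1}

/-- `T_{β,α}` and `T_{β,α'}` have the same matching: both have matching, with the same
matching time `n`, and their kneading invariants agree in the first `n+1` entries. -/
def SameMatching (β α α' : ℝ) : Prop :=
  HasMatching β α ∧ HasMatching β α' ∧ matchingTime β α = matchingTime β α' ∧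
    ∀ i ≤ matchingTime β α, kPlus β α i = kPlus β α' i ∧ kMinus β α i = kMinus β α' i

/-- The matching set `I(β,α)` (a subset of `(0, 2-β)`). -/
def matchInterval (β α : ℝ) : Set ℝ :=
  {α' | α' ∈ Set.Ioo (0 : ℝ) (2 - β) ∧ SameMatching β α α'}

/-- The parameter region `Δ`. -/
def DeltaSet : Set (ℝ × ℝ) :=
  {p | p.1 ∈ Set.Ioo (1 : ℝ) 2 ∧ p.2 ∈ Set.Ioo (0 : ℝ) (2 - p.1)}

/-- A sequence in `{0,1}^ℕ` is periodic. -/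
def IsPeriodicSeq (ω : ℕ → Bool) : Prop :=
  ∃ p : ℕ, 1 ≤ p ∧ ∀ n, ω (n + p) = ω n

/-- A sequence in `{0,1}^ℕ` is eventually periodic. -/
def IsEvPeriodicSeq (ω : ℕ → Bool) : Prop :=
  ∃ k : ℕ, IsPeriodicSeq (fun n => ω (n + k))

/-- Strict lexicographic order on `{0,1}^ℕ`: at the first index where they differ,
`ω` has entry 0 and `ν` has entry 1. -/
def lexLt (ω ν : ℕ → Bool) : Prop :=
  ∃ n : ℕ, (∀ m < n, ω m = ν m) ∧ ω n = false ∧ ν n = true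

lemma isOpen_DeltaSet : IsOpen DeltaSet := by
  have h : DeltaSet = {p : ℝ × ℝ | 1 < p.1} ∩ {p | p.1 < 2} ∩
      ({p | 0 < p.2} ∩ {p | p.2 < 2 - p.1}) := by
    ext p
    simp [DeltaSet]
  rw [h]
  exact ((isOpen_lt (by fun_prop) (by fun_prop)).inter (isOpen_lt (by fun_prop) (by fun_prop))).inter
    ((isOpen_lt (by fun_prop) (by fun_prop)).inter (isOpen_lt (by fun_prop) (by fun_prop)))

lemma fract_of_lt_crit {β α x : ℝ} (h : (β, α) ∈ DeltaSet) (hx : 0 ≤ x)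
    (hc : x < (1 - α) / β) : Int.fract (β * x + α) = β * x + α := by
  obtain ⟨⟨h1, h2⟩, h3, h4⟩ := h
  simp only at h1 h2 h3 h4
  rw [lt_div_iff₀ (by linarith)] at hc
  rw [Int.fract_eq_self]
  constructor
  · have : 0 ≤ β * x := mul_nonneg (by linarith) hx
    linarith
  · linarith

lemma fract_of_crit_lt {β α x : ℝ} (h : (β, α) ∈ DeltaSet) (hx : x ≤ 1)
    (hc : (1 - α) / β < x) : Int.fract (β * x + α) = β * x + α - 1 := by
  obtain ⟨⟨h1, h2⟩, h3, h4⟩ := h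
  simp only at h1 h2 h3 h4
  rw [div_lt_iff₀ (by linarith)] at hc
  rw [← Int.fract_sub_one, Int.fract_eq_self]
  constructor
  · linarith
  · nlinarith

/-- Along a connected family of parameters for which the orbit of `x₀` avoids the critical point,
the digits of `x₀` are constant. -/
lemma exists_digits_of_avoids {T : ℝ → ℝ → ℝ → ℝ}
    (hT : ∀ β α x, x ≠ (1 - α) / β → T β α x = Int.fract (β * x + α))
    {I : Set ℝ} (hI : IsPreconnected I) {β α : ℝ → ℝ}
    (hβ : ContinuousOn β I) (hα : ContinuousOn α I) (hΔ : ∀ t ∈ I, (β t, α t) ∈ DeltaSet)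
    {x₀ : ℝ} (hx₀ : x₀ ∈ Set.Icc (0 : ℝ) 1)
    (hne : ∀ n, ∀ t ∈ I, (T (β t) (α t))^[n] x₀ ≠ (1 - α t) / β t) :
    ∃ a : ℕ → ℝ, (∀ n, a n ∈ Set.Icc (0 : ℝ) 1) ∧ ∀ n, ∀ t ∈ I,
      (T (β t) (α t))^[n] x₀ ∈ Set.Icc (0 : ℝ) 1 ∧
      (T (β t) (α t))^[n + 1] x₀ = β t * (T (β t) (α t))^[n] x₀ + α t - a n := by
  have hcrit : ContinuousOn (fun t => (1 - α t) / β t) I :=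
    (continuousOn_const.sub hα).div hβ fun t ht => by
      have := (hΔ t ht).1.1
      simp only at this
      linarith
  have key : ∀ n, (∀ t ∈ I, (T (β t) (α t))^[n] x₀ ∈ Set.Icc (0 : ℝ) 1) →
      ContinuousOn (fun t => (T (β t) (α t))^[n] x₀) I →
      ∃ a ∈ Set.Icc (0 : ℝ) 1, ∀ t ∈ I,
        (T (β t) (α t))^[n + 1] x₀ = β t * (T (β t) (α t))^[n] x₀ + α t - a := by
    intro n hmem hcont
    by_cases hlt : ∃ s ∈ I, (T (β s) (α s))^[n] x₀ < (1 - α s) / β s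
    · obtain ⟨s, hs, hlt⟩ := hlt
      refine ⟨0, by simp, fun t ht => ?_⟩
      have hlt' : (T (β t) (α t))^[n] x₀ < (1 - α t) / β t := by
        by_contra! hge
        obtain ⟨u, hu, hu'⟩ := hI.intermediate_value₂ hs ht hcont hcrit hlt.le hge
        exact hne n u hu hu'
      rw [Function.iterate_succ_apply', hT _ _ _ (hne n t ht),
        fract_of_lt_crit (hΔ t ht) (hmem t ht).1 hlt', sub_zero]
    · push Not at hlt
      refine ⟨1, by simp, fun t ht => ?_⟩
      rw [Function.iterate_succ_apply', hT _ _ _ (hne n t ht),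
        fract_of_crit_lt (hΔ t ht) (hmem t ht).2 (lt_of_le_of_ne (hlt t ht) (hne n t ht).symm)]
  have hreg : ∀ n, (∀ t ∈ I, (T (β t) (α t))^[n] x₀ ∈ Set.Icc (0 : ℝ) 1) ∧
      ContinuousOn (fun t => (T (β t) (α t))^[n] x₀) I := by
    intro n
    induction n with
    | zero => exact ⟨fun t _ => by simpa using hx₀, by simpa using continuousOn_const⟩
    | succ n ih =>
      refine ⟨fun t ht => ?_, ?_⟩
      · rw [Function.iterate_succ_apply', hT _ _ _ (hne n t ht)]
        exact ⟨Int.fract_nonneg _, (Int.fract_lt_one _).le⟩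
      · obtain ⟨a, -, ha⟩ := key n ih.1 ih.2
        exact ContinuousOn.congr (((hβ.mul ih.2).add hα).sub continuousOn_const) ha
  choose a ha ha' using fun n => key n (hreg n).1 (hreg n).2
  exact ⟨a, ha, fun n t ht => ⟨(hreg n).1 t ht, ha' n t ht⟩⟩

/-- A power series with bounded coefficients and zero constant term is not locally constant
equal to `1` inside the unit interval. -/
lemma not_eventually_hasSum_one {e : ℕ → ℝ} (he : ∀ n, |e n| ≤ 1) {z₀ : ℝ} (hz₀ : |z₀| < 1) :
    ¬ ∀ᶠ z in nhds z₀, HasSum (fun n => e n * z ^ (n + 1)) 1 := by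
  intro h
  let F : ℂ → ℂ := fun z => ∑' n, (e n : ℂ) * z ^ (n + 1)
  have hdiff : DifferentiableOn ℂ F (Metric.ball 0 1) := by
    intro z hz
    rw [mem_ball_zero_iff] at hz
    obtain ⟨r, hzr, hr⟩ := exists_between hz
    have hr0 : 0 ≤ r := (norm_nonneg z).trans hzr.le
    have hd : DifferentiableOn ℂ F (Metric.ball 0 r) := by
      refine Complex.differentiableOn_tsum_of_summable_norm (u := fun n => r ^ (n + 1)) ?_ ?_
        Metric.isOpen_ball ?_
      · exact (summable_nat_add_iff 1).2 (summable_geometric_of_lt_one hr0 hr)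
      · intro n
        fun_prop
      · intro n w hw
        rw [mem_ball_zero_iff] at hw
        rw [norm_mul, norm_pow, Complex.norm_real, Real.norm_eq_abs]
        calc |e n| * ‖w‖ ^ (n + 1) ≤ 1 * r ^ (n + 1) := by
              gcongr
              exact he n
          _ = r ^ (n + 1) := one_mul _
    exact ((hd z (by simpa using hzr)).differentiableAt
      (Metric.isOpen_ball.mem_nhds (by simpa using hzr))).differentiableWithinAt
  have han : AnalyticOnNhd ℂ F (Metric.ball 0 1) := hdiff.analyticOnNhd Metric.isOpen_ball
  have hfreq : ∃ᶠ z in nhdsWithin (z₀ : ℂ) {(z₀ : ℂ)}ᶜ, F z = 1 := by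
    have h1 : ∀ᶠ z : ℝ in nhdsWithin z₀ {z₀}ᶜ, F (z : ℂ) = 1 := by
      filter_upwards [h.filter_mono nhdsWithin_le_nhds] with z hz
      have := (Complex.hasSum_ofReal.2 hz).tsum_eq
      simpa [F] using this
    have ht : Filter.Tendsto (fun z : ℝ => (z : ℂ)) (nhdsWithin z₀ {z₀}ᶜ)
        (nhdsWithin (z₀ : ℂ) {(z₀ : ℂ)}ᶜ) := by
      refine Complex.continuous_ofReal.continuousWithinAt.tendsto_nhdsWithin fun z hz => ?_
      simpa using hz
    exact ht.frequently h1.frequently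
  have hEq := han.eqOn_of_preconnected_of_frequently_eq analyticOnNhd_const
    (convex_ball (0 : ℂ) 1).isPreconnected (by simpa using hz₀) hfreq
  have h0 := hEq (Metric.mem_ball_self one_pos : (0 : ℂ) ∈ Metric.ball 0 1)
  simp [F] at h0

/-- A bounded solution of `D (n + 1) = β * D n - e n` with `D 0 = 1` expands `1` in base `β`. -/
lemma hasSum_one_of_bounded {β : ℝ} (hβ : 1 < β) {e D : ℕ → ℝ} (he : ∀ n, |e n| ≤ 1)
    (hD : ∀ n, |D n| ≤ 1) (h0 : D 0 = 1) (hs : ∀ n, D (n + 1) = β * D n - e n) :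
    HasSum (fun n => e n * β⁻¹ ^ (n + 1)) 1 := by
  have hβ0 : 0 < β := by linarith
  have hi0 : 0 ≤ β⁻¹ := inv_nonneg.2 hβ0.le
  have hi1 : β⁻¹ < 1 := inv_lt_one_of_one_lt₀ hβ
  have hsum : Summable (fun n => e n * β⁻¹ ^ (n + 1)) := by
    refine Summable.of_norm_bounded (g := fun n => β⁻¹ ^ (n + 1))
      ((summable_nat_add_iff 1).2 (summable_geometric_of_lt_one hi0 hi1)) fun n => ?_
    rw [norm_mul, Real.norm_eq_abs, Real.norm_of_nonneg (by positivity)]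
    exact mul_le_of_le_one_left (by positivity) (he n)
  refine (hsum.hasSum_iff_tendsto_nat).2 ?_
  have hpart : ∀ n, ∑ i ∈ Finset.range n, e i * β⁻¹ ^ (i + 1) = 1 - D n * β⁻¹ ^ n := by
    intro n
    induction n with
    | zero => simp [h0]
    | succ n ih =>
      rw [Finset.sum_range_succ, ih, hs, pow_succ]
      field_simp
      ring
  simp_rw [hpart]
  have hz : Filter.Tendsto (fun n => D n * β⁻¹ ^ n) Filter.atTop (nhds 0) := by
    refine squeeze_zero_norm (a := fun n => β⁻¹ ^ n) (fun n => ?_)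
      (tendsto_pow_atTop_nhds_zero_of_lt_one hi0 hi1)
    rw [norm_mul, Real.norm_eq_abs, Real.norm_of_nonneg (by positivity)]
    exact mul_le_of_le_one_left (by positivity) (hD n)
  simpa using hz.const_sub 1

lemma Tpos_of_ne {β α x : ℝ} (h : x ≠ (1 - α) / β) : Tpos β α x = Int.fract (β * x + α) :=
  if_neg h

lemma Tneg_of_ne {β α x : ℝ} (h : x ≠ (1 - α) / β) : Tneg β α x = Int.fract (β * x + α) :=
  if_neg h

lemma Tpos_mem_Icc (β α x : ℝ) : Tpos β α x ∈ Set.Icc (0 : ℝ) 1 := by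
  unfold Tpos
  split_ifs
  · simp
  · exact ⟨Int.fract_nonneg _, (Int.fract_lt_one _).le⟩

lemma Tpos_iterate_zero_mem_Icc (β α : ℝ) (n : ℕ) : (Tpos β α)^[n] 0 ∈ Set.Icc (0 : ℝ) 1 := by
  cases n with
  | zero => simp
  | succ n =>
    rw [Function.iterate_succ_apply']
    exact Tpos_mem_Icc _ _ _

/-- If both critical orbits return to the critical point, there is matching. -/
lemma hasMatching_of_hits {β α : ℝ} {p q : ℕ} (hp : (Tpos β α)^[p] 0 = (1 - α) / β)
    (hq : (Tneg β α)^[q] 1 = (1 - α) / β) : HasMatching β α := by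
  have hp1 : Function.IsPeriodicPt (Tpos β α) (p + 1) 0 := by
    change (Tpos β α)^[p + 1] 0 = 0
    rw [Function.iterate_succ_apply', hp, Tpos, if_pos rfl]
  have hq1 : Function.IsPeriodicPt (Tneg β α) (q + 1) 1 := by
    change (Tneg β α)^[q + 1] 1 = 1
    rw [Function.iterate_succ_apply', hq, Tneg, if_pos rfl]
  refine ⟨p + (p + 1) * q, ?_⟩
  have hpq : p + (p + 1) * q = q + (q + 1) * p := by ring
  calc (Tpos β α)^[p + (p + 1) * q] 0 = (Tpos β α)^[p] 0 := by
        rw [Function.iterate_add_apply, (hp1.mul_const q).eq]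
    _ = (Tneg β α)^[q] 1 := hp.trans hq.symm
    _ = (Tneg β α)^[p + (p + 1) * q] 1 := by
        rw [hpq, Function.iterate_add_apply, (hq1.mul_const p).eq]

/-- For fixed `β`, the parameters `α` for which `0` is periodic are dense. -/
lemma exists_Tpos_hit {U : Set (ℝ × ℝ)} (hU : IsOpen U) (hUΔ : U ⊆ DeltaSet) {β α : ℝ}
    (h : (β, α) ∈ U) : ∃ α', (β, α') ∈ U ∧ ∃ p, (Tpos β α')^[p] 0 = (1 - α') / β := by
  by_contra! hcon
  have hV : IsOpen {t : ℝ | (β, t) ∈ U} := hU.preimage (by fun_prop)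
  obtain ⟨ε, hε, hball⟩ := Metric.isOpen_iff.1 hV α h
  have hβ : 1 < β := (hUΔ h).1.1
  obtain ⟨a, -, ha⟩ := exists_digits_of_avoids (T := Tpos) (β := fun _ => β) (α := fun t => t)
    (fun _ _ _ => Tpos_of_ne) (convex_ball α ε).isPreconnected
    continuousOn_const continuousOn_id (fun t ht => hUΔ (hball ht)) (x₀ := 0) (by simp)
    (fun n t ht => hcon t (hball ht) n)
  have hmem : α + ε / 2 ∈ Metric.ball α ε := by
    rw [Metric.mem_ball, Real.dist_eq, add_sub_cancel_left, abs_of_pos (half_pos hε)]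
    exact half_lt_self hε
  have hgrow : ∀ n : ℕ, n * (ε / 2) ≤ (Tpos β (α + ε / 2))^[n] 0 - (Tpos β α)^[n] 0 := by
    intro n
    induction n with
    | zero => simp
    | succ n ih =>
      rw [(ha n _ hmem).2, (ha n _ (Metric.mem_ball_self hε)).2]
      have h0 : 0 ≤ (n : ℝ) * (ε / 2) := by positivity
      push_cast
      nlinarith
  obtain ⟨n, hn⟩ := exists_nat_gt (1 / (ε / 2))
  rw [div_lt_iff₀ (half_pos hε)] at hn
  have h1 := (ha n _ hmem).1.2
  have h2 := (ha n _ (Metric.mem_ball_self hε)).1.1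
  have h3 := hgrow n
  linarith

/-- Near a parameter for which `0` returns to the critical point after `p` steps, there is a curve
of such parameters on which the first `p + 1` digits of `0` are constant. -/
lemma exists_curve_of_Tpos_hit {β₀ α₀ : ℝ} (hΔ₀ : (β₀, α₀) ∈ DeltaSet) {p : ℕ}
    (hp : (Tpos β₀ α₀)^[p] 0 = (1 - α₀) / β₀)
    (hmin : ∀ k < p, (Tpos β₀ α₀)^[k] 0 ≠ (1 - α₀) / β₀) :
    ∃ (g : ℝ → ℝ) (a : ℕ → ℝ), g β₀ = α₀ ∧ (∀ n, a n ∈ Set.Icc (0 : ℝ) 1) ∧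
      (∀ β, 0 < β → ContinuousAt g β) ∧
      ∀ᶠ β in nhds β₀, (Tpos β (g β))^[p] 0 = (1 - g β) / β ∧
        ∀ k ≤ p, (Tpos β (g β))^[k + 1] 0 = β * (Tpos β (g β))^[k] 0 + g β - a k := by
  have hβ₀ : 0 < β₀ := by
    have := hΔ₀.1.1
    simp only at this
    linarith
  let a : ℕ → ℝ := fun k => if (Tpos β₀ α₀)^[k] 0 < (1 - α₀) / β₀ then 0 else 1
  let P : ℕ → ℝ → ℝ := fun n => Nat.rec (fun _ => 0) (fun _ f β => β * f β + 1) n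
  let Q : ℕ → ℝ → ℝ := fun n => Nat.rec (fun _ => 0) (fun k f β => β * f β + a k) n
  have hP : ∀ n β, P (n + 1) β = β * P n β + 1 := fun _ _ => rfl
  have hQ : ∀ n β, Q (n + 1) β = β * Q n β + a n := fun _ _ => rfl
  have hPc : ∀ n, Continuous (P n) := by
    intro n
    induction n with
    | zero => exact continuous_const
    | succ n ih => exact (continuous_id.mul ih).add continuous_const
  have hQc : ∀ n, Continuous (Q n) := by
    intro n
    induction n with
    | zero => exact continuous_const
    | succ n ih => exact (continuous_id.mul ih).add continuous_const
  have hPnn : ∀ n β, 0 < β → 0 ≤ P n β := by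
    intro n β hβ
    induction n with
    | zero => exact le_rfl
    | succ n ih =>
      rw [hP]
      positivity
  have hPpos : ∀ β, 0 < β → 0 < β * P p β + 1 := fun β hβ => by
    have := mul_nonneg hβ.le (hPnn p β hβ)
    linarith
  let g : ℝ → ℝ := fun β => (1 + β * Q p β) / (β * P p β + 1)
  have hgc : ∀ β, 0 < β → ContinuousAt g β := by
    intro β hβ
    have h1 := (hPc p).continuousAt (x := β)
    have h2 := (hQc p).continuousAt (x := β)
    exact (continuousAt_const.add (continuousAt_id.mul h2)).div
      ((continuousAt_id.mul h1).add continuousAt_const) (hPpos β hβ).ne'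
  have hstep : ∀ β α, (β, α) ∈ DeltaSet →
      (∀ k < p, (P k β * α - Q k β < (1 - α) / β ∧ a k = 0) ∨
        ((1 - α) / β < P k β * α - Q k β ∧ a k = 1)) →
      ∀ k ≤ p, (Tpos β α)^[k] 0 = P k β * α - Q k β := by
    intro β α hΔ hd k
    induction k with
    | zero =>
      intro _
      simp [P, Q]
    | succ k ih =>
      intro hk
      have ih := ih (by omega)
      have hIcc := Tpos_iterate_zero_mem_Icc β α k
      rw [Function.iterate_succ_apply', hP, hQ]
      rcases hd k (by omega) with ⟨h1, h2⟩ | ⟨h1, h2⟩ <;> rw [← ih] at h1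
      · rw [Tpos_of_ne h1.ne, fract_of_lt_crit hΔ hIcc.1 h1, ih, h2]
        ring
      · rw [Tpos_of_ne h1.ne', fract_of_crit_lt hΔ hIcc.2 h1, ih, h2]
        ring
  have hbase : ∀ k ≤ p, (Tpos β₀ α₀)^[k] 0 = P k β₀ * α₀ - Q k β₀ := by
    intro k
    induction k with
    | zero =>
      intro _
      simp [P, Q]
    | succ k ih =>
      intro hk
      have ih := ih (by omega)
      have hIcc := Tpos_iterate_zero_mem_Icc β₀ α₀ k
      have hne := hmin k (by omega)
      rw [Function.iterate_succ_apply', hP, hQ, Tpos_of_ne hne]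
      rcases lt_or_gt_of_ne hne with h1 | h1
      · rw [fract_of_lt_crit hΔ₀ hIcc.1 h1, ih, show a k = 0 from if_pos h1]
        ring
      · rw [fract_of_crit_lt hΔ₀ hIcc.2 h1, ih, show a k = 1 from if_neg h1.not_gt]
        ring
  have hg₀ : g β₀ = α₀ := by
    have h1 := hbase p le_rfl
    rw [hp, div_eq_iff hβ₀.ne'] at h1
    change _ / _ = _
    rw [div_eq_iff (hPpos β₀ hβ₀).ne']
    linarith
  have hgΔ : ∀ᶠ β in nhds β₀, (β, g β) ∈ DeltaSet :=
    (continuousAt_id.prodMk (hgc β₀ hβ₀)).eventually_mem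
      (isOpen_DeltaSet.mem_nhds (by simpa [hg₀] using hΔ₀))
  have hdig : ∀ᶠ β in nhds β₀, ∀ k ∈ Finset.range p,
      (P k β * g β - Q k β < (1 - g β) / β ∧ a k = 0) ∨
        ((1 - g β) / β < P k β * g β - Q k β ∧ a k = 1) := by
    rw [Filter.eventually_all_finset]
    intro k hk
    have hk := Finset.mem_range.1 hk
    have hc1 : ContinuousAt (fun β => P k β * g β - Q k β) β₀ :=
      ((hPc k).continuousAt.mul (hgc β₀ hβ₀)).sub (hQc k).continuousAt
    have hc2 : ContinuousAt (fun β => (1 - g β) / β) β₀ :=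
      (continuousAt_const.sub (hgc β₀ hβ₀)).div continuousAt_id hβ₀.ne'
    rcases lt_or_gt_of_ne (hmin k hk) with h1 | h1
    · have h2 := hc1.eventually_lt hc2 (by rw [hg₀, ← hbase k hk.le]; exact h1)
      filter_upwards [h2] with β hβ
      exact Or.inl ⟨hβ, if_pos h1⟩
    · have h2 := hc2.eventually_lt hc1 (by rw [hg₀, ← hbase k hk.le]; exact h1)
      filter_upwards [h2] with β hβ
      exact Or.inr ⟨hβ, if_neg h1.not_gt⟩
  refine ⟨g, a, hg₀, fun n => ?_, hgc, ?_⟩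
  · simp only [a]
    split_ifs <;> simp
  filter_upwards [hgΔ, hdig] with β hΔ hd
  have hβ : 0 < β := by
    have := hΔ.1.1
    simp only at this
    linarith
  have horb := hstep β (g β) hΔ fun k hk => hd k (Finset.mem_range.2 hk)
  have hgeq : g β * (β * P p β + 1) = 1 + β * Q p β := div_mul_cancel₀ _ (hPpos β hβ).ne'
  have hhit : (Tpos β (g β))^[p] 0 = (1 - g β) / β := by
    rw [horb p le_rfl, eq_div_iff hβ.ne']
    linarith
  refine ⟨hhit, fun k hk => ?_⟩
  rcases hk.lt_or_eq with hk | rfl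
  · rw [horb (k + 1) hk, horb k hk.le, hP, hQ]
    ring
  · rw [Function.iterate_succ_apply', hhit, Tpos, if_pos rfl, mul_div_cancel₀ _ hβ.ne',
      show a k = 1 from if_neg hp.not_lt]
    ring

/-- On an open set of parameters in `Δ`, both critical orbits simultaneously return to the
critical point somewhere. -/
lemma exists_hasMatching {U : Set (ℝ × ℝ)} (hU : IsOpen U) (hUΔ : U ⊆ DeltaSet)
    (hne : U.Nonempty) : ∃ x ∈ U, HasMatching x.1 x.2 := by
  obtain ⟨⟨β₀, α⟩, hα⟩ := hne
  obtain ⟨α₀, hmem, hhit⟩ := exists_Tpos_hit hU hUΔ hα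
  classical
  obtain ⟨g, a, hg₀, ha, hgc, hev⟩ := exists_curve_of_Tpos_hit (hUΔ hmem) (Nat.find_spec hhit)
    fun k hk => Nat.find_min hhit hk
  set p := Nat.find hhit
  have hβ₀ : 1 < β₀ := (hUΔ hmem).1.1
  have hβ₀' : 0 < β₀ := by linarith
  have hUev : ∀ᶠ β in nhds β₀, (β, g β) ∈ U :=
    (continuousAt_id.prodMk (hgc β₀ hβ₀')).eventually_mem (hU.mem_nhds (by simpa [hg₀] using hmem))
  obtain ⟨ε, hε, hball⟩ := Metric.eventually_nhds_iff_ball.1 (hev.and hUev)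
  by_contra! hcon
  have hβpos : ∀ β ∈ Metric.ball β₀ ε, 1 < β := fun β hβ => (hUΔ (hball β hβ).2).1.1
  obtain ⟨b, hb, hb'⟩ := exists_digits_of_avoids (T := Tneg) (β := fun t => t) (α := g)
    (fun _ _ _ => Tneg_of_ne) (convex_ball β₀ ε).isPreconnected
    continuousOn_id
    (fun t ht => (hgc t (by linarith [hβpos t ht])).continuousWithinAt)
    (fun t ht => hUΔ (hball t ht).2) (x₀ := 1) (by simp)
    (fun n t ht hn => hcon _ (hball t ht).2 (hasMatching_of_hits (hball t ht).1.1 hn))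
  have he : ∀ n, |b n - a (n % (p + 1))| ≤ 1 := fun n => by
    have h1 := hb n
    have h2 := ha (n % (p + 1))
    rw [abs_le]
    constructor <;> linarith [h1.1, h1.2, h2.1, h2.2]
  have hsum : ∀ β ∈ Metric.ball β₀ ε,
      HasSum (fun n => (b n - a (n % (p + 1))) * β⁻¹ ^ (n + 1)) 1 := by
    intro β hβ
    obtain ⟨⟨hpβ, hdig⟩, -⟩ := hball β hβ
    have hper : Function.IsPeriodicPt (Tpos β (g β)) (p + 1) 0 := by
      change (Tpos β (g β))^[p + 1] 0 = 0
      rw [Function.iterate_succ_apply', hpβ, Tpos, if_pos rfl]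
    refine hasSum_one_of_bounded (hβpos β hβ) he
      (D := fun n => (Tneg β (g β))^[n] 1 - (Tpos β (g β))^[n] 0) (fun n => ?_) (by simp)
      fun n => ?_
    · have h1 := (hb' n β hβ).1
      have h2 := Tpos_iterate_zero_mem_Icc β (g β) n
      rw [abs_le]
      constructor <;> linarith [h1.1, h1.2, h2.1, h2.2]
    · have h1 := (hb' n β hβ).2
      have h2 := hdig (n % (p + 1)) (Nat.lt_succ_iff.1 (Nat.mod_lt _ p.succ_pos))
      rw [Function.iterate_succ_apply', hper.iterate_mod_apply,
        ← Function.iterate_succ_apply' (Tpos β (g β))] at h2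
      rw [h1, h2]
      ring
  refine not_eventually_hasSum_one he (z₀ := β₀⁻¹) ?_ ?_
  · rw [abs_of_pos (inv_pos.2 hβ₀')]
    exact inv_lt_one_of_one_lt₀ hβ₀
  · have hinv : Filter.Tendsto (fun z : ℝ => z⁻¹) (nhds β₀⁻¹) (nhds β₀) := by
      simpa using tendsto_inv₀ (inv_ne_zero hβ₀'.ne')
    filter_upwards [hinv.eventually_mem (Metric.ball_mem_nhds β₀ hε)] with z hz
    simpa using hsum _ hz

theorem matching_dense_in_Delta :
    closure {p : ℝ × ℝ | p ∈ DeltaSet ∧ HasMatching p.1 p.2} = closure DeltaSet := by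
  refine subset_antisymm (closure_mono fun _ h => h.1) (closure_minimal (fun x hx => ?_)
    isClosed_closure)
  rw [mem_closure_iff]
  intro o ho hxo
  obtain ⟨y, hy, hm⟩ := exists_hasMatching (ho.inter isOpen_DeltaSet) Set.inter_subset_right
    ⟨x, hxo, hx⟩
  exact ⟨y, hy.1, hy.2, hm⟩
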